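/- There is an absolute constant C > 0 with the following property (a number-field generalization of Gallagher's lemma). Let F be a number field with ring of integers O_F, let T ≥ 1 be real, and let c be a complex-valued function on the nonzero integral ideals of O_F such that ∑_𝔫 |c(𝔫)| < ∞. Then ∫_{-T}^{T} | ∑_𝔫 c(𝔫) · (N𝔫)^{-it} |² dt ≤ C · T² · ∫_0^∞ | ∑_{𝔫 : x < N𝔫 ≤ x·e^{1/T}} c(𝔫) |² dx/x, where the outer sums run over all nonzero integral ideals of O_F. -/

import Mathlib

open scoped NumberField
open MeasureTheory FourierTransform SchwartzMap
open scoped ContDiff ENNReal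

theorem aux_ae (f : ℝ → ℂ) (h1 : Integrable f) (h2 : MemLp f 2) :
    (𝓕 (h2.toLp f) : Lp ℂ 2 (volume : Measure ℝ)) =ᵐ[volume] 𝓕 f := by
  have hc : Continuous (𝓕 f) := VectorFourier.fourierIntegral_continuous Real.continuous_fourierChar
    (innerSL ℝ).continuous₂ h1
  apply ae_eq_of_integral_contDiff_smul_eq
  · exact (Lp.memLp _).locallyIntegrable (by norm_num)
  · exact hc.locallyIntegrable
  intro g hg hgs
  have hgs' : HasCompactSupport (fun x => (g x : ℂ)) := hgs.comp_left (g := fun x : ℝ => (x : ℂ)) (by simp)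
  have hg' : ContDiff ℝ ∞ (fun x => (g x : ℂ)) := Complex.ofRealCLM.contDiff.comp hg
  set G : 𝓢(ℝ, ℂ) := hgs'.toSchwartzMap hg' with hG
  have key := congrArg (fun D => D G) (MeasureTheory.Lp.fourier_toTemperedDistribution_eq (h2.toLp f))
  simp only [TemperedDistribution.fourier_apply, Lp.toTemperedDistribution_apply] at key
  have e1 : ∫ x, g x • (𝓕 (h2.toLp f) : Lp ℂ 2 (volume : Measure ℝ)) x = ∫ x, G x • (𝓕 (h2.toLp f) : Lp ℂ 2 (volume : Measure ℝ)) x := by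
    congr 1
  have e2 : ∫ x, g x • 𝓕 f x = ∫ x, G x • 𝓕 f x := by
    congr 1
  rw [e1, e2, ← key]
  have := VectorFourier.integral_fourierIntegral_smul_eq_flip (L := innerₗ ℝ) (μ := volume) (ν := volume)
      Real.continuous_fourierChar continuous_inner G.integrable h1
  have e3 : ∫ x, (𝓕 G) x • (h2.toLp f) x = ∫ x, (𝓕 G) x • f x := by
    apply integral_congr_ae
    filter_upwards [h2.coeFn_toLp] with x hx
    rw [hx]
  rw [e3]
  simpa using! this

theorem aux_planch (f : ℝ → ℂ) (h1 : Integrable f) (h2 : MemLp f 2) :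
    Integrable (fun x => ‖𝓕 f x‖ ^ 2) ∧ ∫ x, ‖𝓕 f x‖ ^ 2 = ∫ x, ‖f x‖ ^ 2 := by
  have h := aux_ae f h1 h2
  have hm : MemLp (𝓕 f) 2 := (memLp_congr_ae h).1 (Lp.memLp _)
  refine ⟨hm.norm.integrable_sq, ?_⟩
  have k := MeasureTheory.Lp.norm_fourier_eq (h2.toLp f)
  have k2 : ∀ u : Lp ℂ 2 (volume : Measure ℝ), ∫ x, ‖u x‖ ^ 2 = ‖u‖ ^ 2 := by
    intro u
    have := congrArg Complex.re (L2.inner_def (𝕜 := ℂ) u u)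
    rw [inner_self_eq_norm_sq_to_K] at this
    simp_rw [inner_self_eq_norm_sq_to_K] at this
    norm_cast at this
    exact (by simpa [← Complex.ofReal_pow, integral_complex_ofReal] using this.symm)
  have a1 : ∫ x, ‖𝓕 f x‖ ^ 2 = ∫ x, ‖(𝓕 (h2.toLp f) : Lp ℂ 2 (volume : Measure ℝ)) x‖ ^ 2 := by
    apply integral_congr_ae
    filter_upwards [h] with x hx
    rw [hx]
  have a2 : ∫ x, ‖f x‖ ^ 2 = ∫ x, ‖(h2.toLp f) x‖ ^ 2 := by
    apply integral_congr_ae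
    filter_upwards [h2.coeFn_toLp] with x hx
    rw [hx]
  rw [a1, a2, k2, k2, k]

noncomputable def gF {ι : Type*} (c : ι → ℂ) (l : ι → ℝ) (h : ℝ) (i : ι) (u : ℝ) : ℂ :=
  (Set.Ico (l i - h) (l i)).indicator (fun _ => c i) u

section
variable {ι : Type*} [Countable ι] (c : ι → ℂ) (l : ι → ℝ) (h : ℝ)

theorem gF_meas (i : ι) : Measurable (gF c l h i) :=
  measurable_const.indicator measurableSet_Ico

theorem gF_int (i : ι) : Integrable (gF c l h i) := by
  refine (integrable_indicator_iff measurableSet_Ico).2 ?_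
  exact integrableOn_const (by simp)

theorem gF_norm_le (i : ι) (u : ℝ) : ‖gF c l h i u‖ ≤ ‖c i‖ :=
  norm_indicator_le_norm_self _ _

theorem gF_norm_int (hh : 0 < h) (i : ι) : ∫ u, ‖gF c l h i u‖ = h * ‖c i‖ := by
  simp only [gF, norm_indicator_eq_indicator_norm]
  rw [integral_indicator measurableSet_Ico]
  simp [hh.le]

theorem gG_meas : Measurable (fun u => ∑' i, gF c l h i u) :=
  Measurable.tsum (fun i => gF_meas c l h i)

theorem gG_norm_le (hc : Summable (fun i => ‖c i‖)) (u : ℝ) :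
    ‖∑' i, gF c l h i u‖ ≤ ∑' i, ‖c i‖ :=
  tsum_of_norm_bounded hc.hasSum (fun i => gF_norm_le c l h i u)

theorem gG_int (hh : 0 < h) (hc : Summable (fun i => ‖c i‖)) :
    Integrable (fun u => ∑' i, gF c l h i u) := by
  refine ⟨(gG_meas c l h).aestronglyMeasurable, ?_⟩
  have h1 : ∀ u, ‖∑' i, gF c l h i u‖ₑ ≤ ∑' i, ‖gF c l h i u‖ₑ := fun u => enorm_tsum_le_tsum_enorm
  refine lt_of_le_of_lt (lintegral_mono h1) ?_
  rw [lintegral_tsum (fun i => (gF_meas c l h i).enorm.aemeasurable)]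
  have h2 : ∀ i, ∫⁻ u, ‖gF c l h i u‖ₑ = ENNReal.ofReal (h * ‖c i‖) := by
    intro i
    rw [← gF_norm_int c l h hh i, ofReal_integral_norm_eq_lintegral_enorm (gF_int c l h i)]
  simp_rw [h2]
  exact (hc.mul_left h).tsum_ofReal_lt_top

theorem gG_memLp (hh : 0 < h) (hc : Summable (fun i => ‖c i‖)) :
    MemLp (fun u => ∑' i, gF c l h i u) 2 := by
  rw [memLp_two_iff_integrable_sq_norm (gG_meas c l h).aestronglyMeasurable]
  refine ((gG_int c l h hh hc).norm.const_mul (∑' i, ‖c i‖)).mono'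
    ((gG_meas c l h).norm.pow_const 2).aestronglyMeasurable (Filter.Eventually.of_forall fun u => ?_)
  rw [Real.norm_of_nonneg (by positivity), sq]
  exact mul_le_mul_of_nonneg_right (gG_norm_le c l h hc u) (norm_nonneg _)

theorem gF_fourier (hh : 0 < h) (t : ℝ) (i : ι) :
    ∫ v : ℝ, Complex.exp (↑(-t * v) * Complex.I) * gF c l h i v =
      (c i * Complex.exp (-(t : ℂ) * l i * Complex.I)) *
        ∫ v in (0:ℝ)..h, Complex.exp ((t * v : ℝ) * Complex.I) := by
  have e1 : ∀ v : ℝ, Complex.exp (↑(-t * v) * Complex.I) * gF c l h i v =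
      (Set.Ico (l i - h) (l i)).indicator
        (fun v : ℝ => Complex.exp (↑(-t * v) * Complex.I) * c i) v := by
    intro v
    by_cases hv : v ∈ Set.Ico (l i - h) (l i) <;> simp only [gF, Set.indicator, hv, if_true, if_false, mul_zero]
  simp_rw [e1]
  rw [integral_indicator measurableSet_Ico, integral_Ico_eq_integral_Ioc,
    ← intervalIntegral.integral_of_le (by linarith)]
  have e2 := intervalIntegral.integral_comp_sub_left
    (fun v : ℝ => Complex.exp (↑(-t * v) * Complex.I) * c i) (l i) (a := 0) (b := h)
  rw [sub_zero] at e2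
  rw [← e2, ← intervalIntegral.integral_const_mul]
  congr 1
  ext v
  rw [mul_assoc, ← Complex.exp_add, mul_comm]
  congr 2
  push_cast
  ring

theorem gG_fourier (hh : 0 < h) (hc : Summable (fun i => ‖c i‖)) (t : ℝ) :
    𝓕 (fun u => ∑' i, gF c l h i u) ((2 * Real.pi)⁻¹ * t) =
      (∑' i, c i * Complex.exp (-(t : ℂ) * l i * Complex.I)) *
        ∫ v in (0:ℝ)..h, Complex.exp ((t * v : ℝ) * Complex.I) := by
  rw [Real.fourier_real_eq_integral_exp_smul]
  have e0 : ∀ v : ℝ, (-2 * Real.pi * v * ((2 * Real.pi)⁻¹ * t)) = -t * v := by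
    intro v
    field_simp
  simp_rw [e0, smul_eq_mul, ← tsum_mul_left]
  have hn : ∀ i (v : ℝ), ‖Complex.exp (↑(-t * v) * Complex.I) * gF c l h i v‖ = ‖gF c l h i v‖ := by
    intro i v
    rw [norm_mul, Complex.norm_exp_ofReal_mul_I, one_mul]
  have hs := hasSum_integral_of_summable_integral_norm (μ := volume)
    (F := fun i (v : ℝ) => Complex.exp (↑(-t * v) * Complex.I) * gF c l h i v) ?_ ?_
  · rw [← hs.tsum_eq, ← tsum_mul_right]
    exact tsum_congr (fun i => gF_fourier c l h hh t i)
  · intro i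
    refine (gF_int c l h i).mono ?_ (Filter.Eventually.of_forall fun v => (hn i v).le)
    refine (Continuous.aestronglyMeasurable (by fun_prop)).mul (gF_meas c l h i).aestronglyMeasurable
  · simp_rw [hn, gF_norm_int c l h hh]
    exact hc.mul_left h

theorem K_lower (T : ℝ) (hT : 0 < T) (t : ℝ) (ht : |t| ≤ T) :
    1 / (2 * T) ≤ ‖∫ v in (0:ℝ)..(1 / T), Complex.exp ((t * v : ℝ) * Complex.I)‖ := by
  refine le_trans ?_ (Complex.re_le_norm _)
  have hi : IntervalIntegrable (fun v : ℝ => Complex.exp ((t * v : ℝ) * Complex.I)) volume 0 (1 / T) :=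
    Continuous.intervalIntegrable (by fun_prop) _ _
  have e : (∫ v in (0:ℝ)..(1 / T), Complex.exp ((t * v : ℝ) * Complex.I)).re =
      ∫ v in (0:ℝ)..(1 / T), Real.cos (t * v) := by
    have := Complex.reCLM.intervalIntegral_comp_comm hi
    simp only [Complex.reCLM_apply, Complex.exp_ofReal_mul_I_re] at this
    exact this.symm
  rw [e]
  have h0 : (0:ℝ) ≤ 1 / T := by positivity
  have : ∫ v in (0:ℝ)..(1 / T), (1 / 2 : ℝ) ≤ ∫ v in (0:ℝ)..(1 / T), Real.cos (t * v) := by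
    apply intervalIntegral.integral_mono_on h0
    · simp
    · exact Continuous.intervalIntegrable (by fun_prop) _ _
    · intro v hv
      have h1 := Real.one_sub_sq_div_two_le_cos (x := t * v)
      have h2 : |t * v| ≤ 1 := by
        rw [abs_mul, abs_of_nonneg hv.1]
        calc |t| * v ≤ T * (1 / T) := mul_le_mul ht hv.2 hv.1 hT.le
          _ = 1 := by field_simp
      have h3 : (t * v) ^ 2 ≤ 1 := by rw [← sq_abs]; nlinarith [abs_nonneg (t * v)]
      linarith
  refine le_trans (le_of_eq ?_) this
  rw [intervalIntegral.integral_const, smul_eq_mul]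
  field_simp
  ring

theorem main_log (T : ℝ) (hT : 0 < T) (hc : Summable (fun i => ‖c i‖)) :
    (∫ t in (-T)..T, ‖∑' i, c i * Complex.exp (-(t : ℂ) * l i * Complex.I)‖ ^ 2) ≤
      8 * Real.pi * T ^ 2 * ∫ u, ‖∑' i, gF c l (1 / T) i u‖ ^ 2 := by
  have hh : 0 < 1 / T := by positivity
  have hpi := Real.pi_pos
  obtain ⟨p1, p2⟩ := aux_planch _ (gG_int c l _ hh hc) (gG_memLp c l _ hh hc)
  set W : ℝ → ℝ := fun x => ‖𝓕 (fun u => ∑' i, gF c l (1 / T) i u) x‖ ^ 2 with hW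
  have hWi : Integrable (fun t => 4 * T ^ 2 * W ((2 * Real.pi)⁻¹ * t)) :=
    (p1.comp_mul_left' (by positivity)).const_mul _
  have hle : ∀ t ∈ Set.Ioc (-T) T, ‖∑' i, c i * Complex.exp (-(t : ℂ) * l i * Complex.I)‖ ^ 2 ≤
      4 * T ^ 2 * W ((2 * Real.pi)⁻¹ * t) := by
    intro t ht
    have k := K_lower T hT t (abs_le.2 ⟨ht.1.le, ht.2⟩)
    simp only [hW]
    rw [gG_fourier c l _ hh hc t, norm_mul, mul_pow]
    have k2 : 1 ≤ 2 * T * ‖∫ v in (0:ℝ)..(1 / T), Complex.exp ((t * v : ℝ) * Complex.I)‖ := by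
      rw [div_le_iff₀ (by positivity)] at k
      linarith
    have k3 := one_le_pow₀ k2 (n := 2)
    rw [mul_pow] at k3
    nlinarith [sq_nonneg ‖∑' i, c i * Complex.exp (-(t : ℂ) * l i * Complex.I)‖]
  rw [intervalIntegral.integral_of_le (by linarith)]
  calc _ ≤ ∫ t in Set.Ioc (-T) T, 4 * T ^ 2 * W ((2 * Real.pi)⁻¹ * t) := by
        apply integral_mono_of_nonneg
        · exact Filter.Eventually.of_forall fun t => by positivity
        · exact hWi.integrableOn
        · exact (ae_restrict_iff' measurableSet_Ioc).2 (Filter.Eventually.of_forall hle)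
    _ ≤ ∫ t, 4 * T ^ 2 * W ((2 * Real.pi)⁻¹ * t) :=
        setIntegral_le_integral hWi (Filter.Eventually.of_forall fun t => by
          simp only [hW]; positivity)
    _ = 8 * Real.pi * T ^ 2 * ∫ u, ‖∑' i, gF c l (1 / T) i u‖ ^ 2 := by
        rw [integral_const_mul, Measure.integral_comp_mul_left W, p2, inv_inv, abs_of_pos (by positivity),
          smul_eq_mul]
        ring
end

theorem ideal_countable (F : Type) [Field F] [NumberField F] : Countable (Ideal (NumberField.RingOfIntegers F)) := by
  rw [← Set.countable_univ_iff]
  refine (Set.countable_iUnion (fun n : ℕ => (Ideal.finite_setOfPred_absNorm_le (S := NumberField.RingOfIntegers F) n).countable)).mono ?_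
  intro I _
  exact Set.mem_iUnion.2 ⟨Ideal.absNorm I, Set.mem_ofPred_eq ▸ le_refl _⟩

/-- A number-field generalization of Gallagher's lemma: there is an absolute constant `C > 0`
such that for every number field `F`, every real `T ≥ 1`, and every absolutely summable
`c` on the ideals of `𝓞 F` vanishing on the zero ideal,
`∫_{-T}^{T} |∑_𝔫 c(𝔫) (N𝔫)^{-it}|² dt
  ≤ C T² ∫_0^∞ |∑_{x < N𝔫 ≤ x e^{1/T}} c(𝔫)|² dx/x`. -/
theorem gallagher_number_field :
    ∃ C : ℝ, 0 < C ∧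
      ∀ (F : Type) [Field F] [NumberField F] (T : ℝ), 1 ≤ T →
        ∀ c : Ideal (𝓞 F) → ℂ, c 0 = 0 → Summable (fun I => ‖c I‖) →
          (∫ t in (-T)..T,
              ‖∑' I : Ideal (𝓞 F),
                  c I * (Ideal.absNorm I : ℂ) ^ (-(t : ℂ) * Complex.I)‖ ^ 2) ≤
            C * T ^ 2 *
              ∫ x in Set.Ioi (0 : ℝ),
                ‖∑' I : {I : Ideal (𝓞 F) //
                    x < (Ideal.absNorm I : ℝ) ∧
                      (Ideal.absNorm I : ℝ) ≤ x * Real.exp (1 / T)}, c I.1‖ ^ 2 / x := by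

  refine ⟨8 * Real.pi, by positivity, ?_⟩
  intro F _ _ T hT c hc0 hc
  have hT0 : 0 < T := by linarith
  have := ideal_countable F
  have hm := main_log c (fun I => Real.log (Ideal.absNorm I : ℝ)) T hT0 hc
  have hpos : ∀ I : Ideal (𝓞 F), I ≠ 0 → (0 : ℝ) < (Ideal.absNorm I : ℝ) := by
    intro I hI
    have : Ideal.absNorm I ≠ 0 := by
      rw [Ne, Ideal.absNorm_eq_zero_iff]
      exact hI
    exact_mod_cast Nat.pos_of_ne_zero this
  have hL : ∀ t : ℝ, ∑' I : Ideal (𝓞 F), c I * (Ideal.absNorm I : ℂ) ^ (-(t : ℂ) * Complex.I) =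
      ∑' I : Ideal (𝓞 F), c I * Complex.exp (-(t : ℂ) * (Real.log (Ideal.absNorm I : ℝ) : ℝ) * Complex.I) := by
    intro t
    refine tsum_congr fun I => ?_
    by_cases hI : I = 0
    · rw [hI, hc0, zero_mul, zero_mul]
    · have := hpos I hI
      have hne : (Ideal.absNorm I : ℂ) ≠ 0 := by
        exact_mod_cast this.ne'
      rw [Complex.cpow_def_of_ne_zero hne, Complex.ofReal_log this.le]
      congr 2
      push_cast
      ring
  simp_rw [hL]
  refine hm.trans (le_of_eq ?_)
  congr 1
  have hch := integral_image_eq_integral_abs_deriv_smul (s := Set.univ) (f := Real.exp) (f' := Real.exp)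
    MeasurableSet.univ (fun x _ => (Real.hasDerivAt_exp x).hasDerivWithinAt) Real.exp_injective.injOn
    (fun x : ℝ => ‖∑' I : {I : Ideal (𝓞 F) // x < (Ideal.absNorm I : ℝ) ∧
                      (Ideal.absNorm I : ℝ) ≤ x * Real.exp (1 / T)}, c I.1‖ ^ 2 / x)
  rw [Set.image_univ, Real.range_exp, Measure.restrict_univ] at hch
  rw [hch]
  congr 1
  ext u
  have hu := Real.exp_pos u
  rw [abs_of_pos hu, smul_eq_mul, mul_div_cancel₀ _ hu.ne']
  congr 2
  have := tsum_subtype {I : Ideal (𝓞 F) | Real.exp u < (Ideal.absNorm I : ℝ) ∧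
                      (Ideal.absNorm I : ℝ) ≤ Real.exp u * Real.exp (1 / T)} c
  refine Eq.trans ?_ this.symm
  refine tsum_congr fun I => ?_
  by_cases hI : I = 0
  · subst hI
    have hb : c ⊥ = 0 := hc0
    simp [gF, Set.indicator, hb]
  · have hN := hpos I hI
    have hiff : u ∈ Set.Ico (Real.log (Ideal.absNorm I : ℝ) - 1 / T) (Real.log (Ideal.absNorm I : ℝ)) ↔
        I ∈ {I : Ideal (𝓞 F) | Real.exp u < (Ideal.absNorm I : ℝ) ∧
                      (Ideal.absNorm I : ℝ) ≤ Real.exp u * Real.exp (1 / T)} := by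
      rw [Set.mem_Ico, Set.mem_ofPred_eq, ← Real.exp_add, ← Real.lt_log_iff_exp_lt hN,
        ← Real.log_le_iff_le_exp hN, sub_le_iff_le_add, and_comm]
    by_cases hmem : u ∈ Set.Ico (Real.log (Ideal.absNorm I : ℝ) - 1 / T) (Real.log (Ideal.absNorm I : ℝ))
    · rw [gF, Set.indicator_of_mem hmem, Set.indicator_of_mem (hiff.1 hmem)]
    · rw [gF, Set.indicator_of_notMem hmem, Set.indicator_of_notMem (fun hx => hmem (hiff.2 hx))]
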